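/- For every integer r ≥ 2, asymptotically almost surely z_{R^(r)}(RM_n^(r)) ∼ ((r-1)!/r^(r-1))·n; that is, for every ε > 0, the probability that |z_{R^(r)}(RM_n^(r)) − ((r-1)!/r^(r-1))·n| ≤ ε·n tends to 1 as n → ∞. -/

import Mathlib

open Finset
open scoped Classical

/-- An ordered `r`-matching of size `n`: a partition of `[r*n] = {1,…,r*n}` into `n`
pairwise disjoint `r`-element subsets (the edges). -/
def IsOrderedMatching (r n : ℕ) (M : Finset (Finset ℕ)) : Prop :=
  M.card = n ∧ (∀ e ∈ M, e.card = r) ∧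
  (∀ e ∈ M, ∀ f ∈ M, e ≠ f → Disjoint e f) ∧
  M.biUnion id = Finset.Icc 1 (r * n)

/-- Two disjoint `r`-element sets `e`, `f` form the `r`-pattern `P`: the unique
order-preserving bijection from `e ∪ f` onto `[2r]` maps the pair `{e, f}` onto `P`. -/
def FormsPattern (r : ℕ) (e f : Finset ℕ) (P : Finset (Finset ℕ)) : Prop :=
  ∃ φ : ℕ → ℕ, StrictMonoOn φ ↑(e ∪ f) ∧
    (e ∪ f).image φ = Finset.Icc 1 (2 * r) ∧
    ({e.image φ, f.image φ} : Finset (Finset ℕ)) = P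

/-- A `Ps`-clique: a family of pairwise disjoint `r`-element subsets of `ℕ`, every two of
which form a pattern belonging to `Ps`. -/
def IsClique (r : ℕ) (Ps : Set (Finset (Finset ℕ))) (K : Finset (Finset ℕ)) : Prop :=
  (∀ e ∈ K, e.card = r) ∧ (∀ e ∈ K, ∀ f ∈ K, e ≠ f → Disjoint e f) ∧
  (∀ e ∈ K, ∀ f ∈ K, e ≠ f → ∃ P ∈ Ps, FormsPattern r e f P)

/-- `z_Ps(M)`: the maximum size of a subfamily of `M` that is a `Ps`-clique. -/
noncomputable def zClique (r : ℕ) (Ps : Set (Finset (Finset ℕ))) (M : Finset (Finset ℕ)) : ℕ :=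
  sSup {k | ∃ K : Finset (Finset ℕ), K ⊆ M ∧ IsClique r Ps K ∧ K.card = k}

/-- All ordered `r`-matchings of size `n` (as a finset). -/
noncomputable def matchingFamilies (r n : ℕ) : Finset (Finset (Finset ℕ)) :=
  ((Finset.Icc 1 (r * n)).powerset.powerset).filter (IsOrderedMatching r n)

/-- The probability of the event `A` for a uniformly random ordered `r`-matching of size `n`. -/
noncomputable def prob (r n : ℕ) (A : Finset (Finset ℕ) → Prop) : ℝ :=
  (((matchingFamilies r n).filter A).card : ℝ) / ((matchingFamilies r n).card : ℝ)

/-- Expectation of `X` with respect to a uniformly random ordered `r`-matching of size `n`. -/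
noncomputable def expect (r n : ℕ) (X : Finset (Finset ℕ) → ℝ) : ℝ :=
  (∑ M ∈ matchingFamilies r n, X M) / ((matchingFamilies r n).card : ℝ)

/-- An `r`-partite `r`-pattern: each edge contains exactly one of `{2i-1, 2i}` for each
`i = 1, …, r`. -/
def IsPartitePattern (r : ℕ) (P : Finset (Finset ℕ)) : Prop :=
  IsOrderedMatching r 2 P ∧
  ∀ e ∈ P, ∀ i ∈ Finset.Icc 1 r, (e ∩ {2 * i - 1, 2 * i}).card = 1

/-- An `r`-pattern `P` is collectable if there exist arbitrarily large `{P}`-cliques. -/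
def Collectable (r : ℕ) (P : Finset (Finset ℕ)) : Prop :=
  ∀ k : ℕ, ∃ K : Finset (Finset ℕ), IsClique r {P} K ∧ K.card = k

/-- The word of a pattern `P` over `{A=true, B=false}`: the `j`-th letter is `true` iff
vertex `j` lies in the edge of `P` containing `1`. -/
noncomputable def patternWord (r : ℕ) (P : Finset (Finset ℕ)) : List Bool :=
  (List.range (2 * r)).map (fun j => decide (∃ e ∈ P, 1 ∈ e ∧ j + 1 ∈ e))

/-- `lam` is a splitting of the word `w` into consecutive blocks of the form
`A^t B^t` or `B^t A^t` with half-lengths given by `lam`. -/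
def IsBlockSplitting (w : List Bool) (lam : List ℕ) : Prop :=
  (∀ t ∈ lam, 1 ≤ t) ∧
  ∃ bs : List Bool, bs.length = lam.length ∧
    w = (List.zipWith (fun t b => List.replicate t b ++ List.replicate t !b) lam bs).flatten

/-- The pattern `P` has composition `lam` (the sequence of half-lengths of the blocks of
its unique splitting). -/
def HasComposition (r : ℕ) (P : Finset (Finset ℕ)) (lam : List ℕ) : Prop :=
  IsBlockSplitting (patternWord r P) lam

/-- Two distinct collectable `r`-patterns are harmonious if they have the same composition. -/
def Harmonious (r : ℕ) (P Q : Finset (Finset ℕ)) : Prop :=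
  P ≠ Q ∧ Collectable r P ∧ Collectable r Q ∧
  ∃ lam : List ℕ, HasComposition r P lam ∧ HasComposition r Q lam

/-- A pair of distinct `r`-patterns is a mismatch if exactly one of them is collectable, or
both are collectable but their compositions differ. -/
def Mismatch (r : ℕ) (P Q : Finset (Finset ℕ)) : Prop :=
  P ≠ Q ∧
  ((Collectable r P ∧ ¬ Collectable r Q) ∨
   (¬ Collectable r P ∧ Collectable r Q) ∨
   (Collectable r P ∧ Collectable r Q ∧
     ¬ ∃ lam : List ℕ, HasComposition r P lam ∧ HasComposition r Q lam))

/-- The trace of an ordered `r`-matching of size `k` on `[rk]`: the `j`-th letter equals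
`i` when `j` is the `i`-th smallest element of the edge containing `j`. -/
noncomputable def trace (r k : ℕ) (M : Finset (Finset ℕ)) : List ℕ :=
  (List.range (r * k)).map (fun j₀ =>
    ((Finset.Icc 1 (r * k)).filter
      (fun x => x ≤ j₀ + 1 ∧ ∃ e ∈ M, j₀ + 1 ∈ e ∧ x ∈ e)).card)

/-- `a_Ps(k)`: the number of `Ps`-cliques of size `k` whose edges partition `[rk]`. -/
noncomputable def cliqueCount (r : ℕ) (Ps : Set (Finset (Finset ℕ))) (k : ℕ) : ℕ :=
  (((Finset.Icc 1 (r * k)).powerset.powerset).filter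
    (fun M => IsOrderedMatching r k M ∧ IsClique r Ps M)).card

/-- The maximum size of any `Ps`-clique whatsoever. -/
noncomputable def maxCliqueSize (r : ℕ) (Ps : Set (Finset (Finset ℕ))) : ℕ :=
  sSup {k | ∃ K : Finset (Finset ℕ), IsClique r Ps K ∧ K.card = k}

/-- `M` contains a copy of the ordered `r`-matching `H` of size `k`: a subfamily `N ⊆ M` of
`k` edges such that the order-preserving bijection from the union of the edges of `N`
onto `[rk]` maps `N` onto `H`. -/
def ContainsCopy (r k : ℕ) (H M : Finset (Finset ℕ)) : Prop :=
  ∃ N ⊆ M, N.card = k ∧ ∃ φ : ℕ → ℕ,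
    StrictMonoOn φ ↑(N.biUnion id) ∧
    (N.biUnion id).image φ = Finset.Icc 1 (r * k) ∧
    N.image (fun e => e.image φ) = H

/-- Delete the `j`-th smallest element of the finite set `e`. -/
def deleteJth (j : ℕ) (e : Finset ℕ) : Finset ℕ :=
  e.filter (fun x => (e.filter (· ≤ x)).card ≠ j)

/-- Relabel the elements of `e` order-preservingly by their ranks in `V`. -/
def relabel (V : Finset ℕ) (e : Finset ℕ) : Finset ℕ :=
  e.image (fun x => (V.filter (· ≤ x)).card)

/-- `S^(−j)`: delete from each edge of the pattern `S` its `j`-th smallest element and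
relabel the remaining vertices order-preservingly. -/
def patternDelete (j : ℕ) (S : Finset (Finset ℕ)) : Finset (Finset ℕ) :=
  (S.image (deleteJth j)).image (relabel ((S.image (deleteJth j)).biUnion id))

/-!
An `r`-partite clique is the same as a family of pairwise disjoint `r`-sets that are transversal to
a common sequence of cut points `t₀ ≤ t₁ ≤ ⋯ ≤ t_r`, meaning that the `i`-th smallest element of
each set lies in `(t_{i-1}, t_i]`. Hence the largest `r`-partite clique of a matching on `[rn]` is
the maximum over `t` of the number of its edges transversal to `t`. There are
`∏ (t_i - t_{i-1}) ≤ n ^ r` transversal sets by AM-GM, with equality for `t_i = i * n`, and each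
`r`-set is an edge of the random matching with probability `n / (rn).choose r`, which gives the mean
`n ^ r * n / (rn).choose r ∼ (r - 1)! / r ^ (r - 1) * n`. Two disjoint `r`-sets are edges
almost independently, so Chebyshev's inequality yields concentration for each fixed `t`. Only
boundedly many `t` have to be considered: rounding the cut points to a grid of mesh about `n / m`
affects only the edges meeting the `r + 1` skipped intervals, which number about
`(r + 1) * n / m` at most.
-/

/-! ### Ranks -/

section Rank

variable {α β : Type*} [LinearOrder α] [LinearOrder β]

/-- The number of elements of `e` that are at most `x`, where `x` need not lie in `e`; the
`i`-th smallest element of `e` has rank `i`, counting from `1`. -/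
def rankIn (e : Finset α) (x : α) : ℕ := #{y ∈ e | y ≤ x}

lemma monotone_rankIn (e : Finset α) : Monotone (rankIn e) := fun _ _ hxy ↦
  card_le_card <| monotone_filter_right e fun _ _ hz ↦ hz.trans hxy

lemma rankIn_le_card (e : Finset α) (x : α) : rankIn e x ≤ #e := card_filter_le _ _

lemma rankIn_lt_rankIn {e : Finset α} {x y : α} (hy : y ∈ e) (hxy : x < y) :
    rankIn e x < rankIn e y := by
  refine card_lt_card <| (ssubset_iff_of_subset ?_).2 ⟨y, by simp [hy], by simp [hxy]⟩
  exact monotone_filter_right e fun _ _ hz ↦ hz.trans hxy.le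

lemma rankIn_le_rankIn_iff {e : Finset α} {x y : α} (hx : x ∈ e) :
    rankIn e x ≤ rankIn e y ↔ x ≤ y :=
  ⟨fun h ↦ not_lt.1 fun hyx ↦ h.not_gt (rankIn_lt_rankIn hx hyx), fun h ↦ monotone_rankIn e h⟩

lemma strictMonoOn_rankIn (e : Finset α) : StrictMonoOn (rankIn e) e := fun _ _ _ hy hxy ↦
  rankIn_lt_rankIn hy hxy

lemma image_rankIn (e : Finset α) : e.image (rankIn e) = Icc 1 #e := by
  refine eq_of_subset_of_card_le (image_subset_iff.2 fun x hx ↦ mem_Icc.2 ⟨?_, ?_⟩) ?_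
  · exact card_pos.2 ⟨x, by simp [hx]⟩
  · exact rankIn_le_card e x
  · rw [card_image_of_injOn (strictMonoOn_rankIn e).injOn, Nat.card_Icc, Nat.add_sub_cancel]

lemma card_filter_rankIn_le {e : Finset α} {i : ℕ} (hi : i ≤ #e) :
    #{x ∈ e | rankIn e x ≤ i} = i := by
  have himage : image (rankIn e) {x ∈ e | rankIn e x ≤ i} = Icc 1 i := by
    rw [← filter_image (p := (· ≤ i)), image_rankIn]
    ext j
    simp only [mem_filter, mem_Icc]
    omega
  rw [← card_image_of_injOn ((strictMonoOn_rankIn e).injOn.mono (filter_subset _ _)), himage,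
    Nat.card_Icc, Nat.add_sub_cancel]

lemma rankIn_union {e f : Finset α} (hef : Disjoint e f) (x : α) :
    rankIn (e ∪ f) x = rankIn e x + rankIn f x := by
  rw [rankIn, filter_union, card_union_of_disjoint (disjoint_filter_filter hef), rankIn, rankIn]

lemma rankIn_image {φ : α → β} {e : Finset α} {a : α} {b : β} (hφ : Set.InjOn φ e)
    (hab : ∀ x ∈ e, φ x ≤ b ↔ x ≤ a) : rankIn (e.image φ) b = rankIn e a := by
  rw [rankIn, filter_image, card_image_of_injOn (hφ.mono (filter_subset _ _)),
    filter_congr hab, rankIn]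

lemma rankIn_add_card_filter (e : Finset α) {a b : α} (hab : a ≤ b) :
    rankIn e a + #{x ∈ e | a < x ∧ x ≤ b} = rankIn e b := by
  rw [rankIn, rankIn, ← card_union_of_disjoint]
  · congr 1
    grind
  · rw [disjoint_left]
    grind

lemma rankIn_congr [LocallyFiniteOrder α] {e : Finset α} {a b : α} (hab : a ≤ b)
    (h : Disjoint e (Ioc a b)) : rankIn e a = rankIn e b := by
  rw [← rankIn_add_card_filter e hab, filter_eq_empty_iff.2, card_empty, add_zero]
  exact fun x hx hxab ↦ disjoint_left.1 h hx (mem_Ioc.2 hxab)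

lemma exists_mem_Ioc_of_rankIn_lt [LocallyFiniteOrder α] {e : Finset α} {a b : α}
    (h : rankIn e a < rankIn e b) : ∃ x ∈ e, x ∈ Ioc a b := by
  by_contra! hdisj
  exact h.ne (rankIn_congr ((monotone_rankIn e).reflect_lt h).le (disjoint_left.2 hdisj))

end Rank

/-! ### Transversal edges and `r`-partite cliques -/

/-- The cut points `t 0 ≤ t 1 ≤ ⋯ ≤ t r` delimit the `r` intervals `(t (i - 1), t i]`; an
`r`-element set is transversal to them if its `i`-th smallest element lies in the `i`-th interval.
This is encoded by prescribing how many elements of `e` are at most each cut point. -/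
def IsTransversal {r : ℕ} (t : Fin (r + 1) → ℕ) (e : Finset ℕ) : Prop :=
  ∀ i, rankIn e (t i) = i

lemma forall_card_inter_pair_eq_one_iff_isTransversal {e : Finset ℕ} (he : 0 ∉ e) (r : ℕ) :
    (∀ i ∈ Icc 1 r, #(e ∩ {2 * i - 1, 2 * i}) = 1) ↔
      IsTransversal (fun i : Fin (r + 1) ↦ 2 * (i : ℕ)) e := by
  have hstep (i : ℕ) : rankIn e (2 * i) + #(e ∩ {2 * (i + 1) - 1, 2 * (i + 1)}) =
      rankIn e (2 * (i + 1)) := by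
    rw [← rankIn_add_card_filter e (show 2 * i ≤ 2 * (i + 1) by omega), ← filter_mem_eq_inter]
    congr 2
    refine filter_congr fun x _ ↦ ?_
    simp only [mem_insert, mem_singleton]
    omega
  constructor
  · intro h i
    induction i using Fin.induction with
    | zero => exact card_eq_zero.2 (filter_eq_empty_iff.2 fun x hx hx0 ↦ he (by grind))
    | succ i ih =>
      have hi := h (i + 1) (mem_Icc.2 (by omega))
      simp only [Fin.val_castSucc, Fin.val_succ] at ih ⊢
      rw [← hstep, ih, hi]
  · intro h i hi
    obtain ⟨hi₁, hir⟩ := mem_Icc.1 hi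
    obtain ⟨j, rfl⟩ := Nat.exists_eq_add_of_le' hi₁
    have hj : rankIn e (2 * j) = j := h ⟨j, by omega⟩
    have hj' : rankIn e (2 * (j + 1)) = j + 1 := h ⟨j + 1, by omega⟩
    have := hstep j
    omega

lemma isOrderedMatching_two_image {r : ℕ} (hr : 0 < r) {φ : ℕ → ℕ} {e f : Finset ℕ}
    (hef : Disjoint e f) (he : #e = r) (hf : #f = r) (hφ : Set.InjOn φ ↑(e ∪ f))
    (himage : (e ∪ f).image φ = Icc 1 (2 * r)) :
    IsOrderedMatching r 2 {e.image φ, f.image φ} := by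
  have hφe : Set.InjOn φ e := hφ.mono (by simp)
  have hφf : Set.InjOn φ f := hφ.mono (by simp)
  have hdisj : Disjoint (e.image φ) (f.image φ) := by
    rw [← disjoint_coe, coe_image, coe_image]
    exact Set.disjoint_image_image fun x hx y hy hxy ↦
      disjoint_left.1 hef hx (hφ (by simp [hx]) (by simp [hy]) hxy ▸ hy)
  have hne : (e.image φ).Nonempty := (card_pos.1 (he ▸ hr)).image φ
  refine ⟨card_pair fun h ↦ hne.ne_empty (disjoint_self.1 (h ▸ hdisj)), ?_, ?_, ?_⟩
  · simp [card_image_of_injOn hφe, card_image_of_injOn hφf, he, hf]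
  · simp [hdisj, hdisj.symm]
  · rw [mul_comm r, ← himage, image_union, biUnion_insert, singleton_biUnion, id, id]

lemma exists_partite_formsPattern {r : ℕ} (hr : 0 < r) {t : Fin (r + 1) → ℕ} {e f : Finset ℕ}
    (hef : Disjoint e f) (he : #e = r) (hf : #f = r) (het : IsTransversal t e)
    (hft : IsTransversal t f) : ∃ P, IsPartitePattern r P ∧ FormsPattern r e f P := by
  set φ := rankIn (e ∪ f)
  have hφ : StrictMonoOn φ ↑(e ∪ f) := strictMonoOn_rankIn _
  have himage : (e ∪ f).image φ = Icc 1 (2 * r) := by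
    rw [image_rankIn, card_union_of_disjoint hef, he, hf, two_mul]
  have hcut (i : Fin (r + 1)) : φ (t i) = 2 * i :=
    (rankIn_union hef _).trans (by rw [het, hft, two_mul])
  have hpairs : ∀ g ⊆ e ∪ f, IsTransversal t g →
      ∀ i ∈ Icc 1 r, #(g.image φ ∩ {2 * i - 1, 2 * i}) = 1 := by
    intro g hg hgt
    refine (forall_card_inter_pair_eq_one_iff_isTransversal (fun h0 ↦ ?_) r).2 fun i ↦ ?_
    · simpa [himage] using image_subset_image hg h0
    · refine (rankIn_image (φ := φ) (b := 2 * i) (hφ.injOn.mono hg) fun x hx ↦ ?_).trans (hgt i)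
      rw [← hcut i, rankIn_le_rankIn_iff (hg hx)]
  refine ⟨{e.image φ, f.image φ},
    ⟨isOrderedMatching_two_image hr hef he hf hφ.injOn himage, ?_⟩, φ, hφ, himage, rfl⟩
  simpa using And.intro (hpairs e subset_union_left het) (hpairs f subset_union_right hft)

lemma isClique_of_isTransversal {r : ℕ} (hr : 0 < r) {K : Finset (Finset ℕ)}
    (hcard : ∀ e ∈ K, #e = r) (hdisj : ∀ e ∈ K, ∀ f ∈ K, e ≠ f → Disjoint e f)
    {t : Fin (r + 1) → ℕ} (ht : ∀ e ∈ K, IsTransversal t e) :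
    IsClique r {P | IsPartitePattern r P} K :=
  ⟨hcard, hdisj, fun e he f hf hef ↦ exists_partite_formsPattern hr (hdisj e he f hf hef)
    (hcard e he) (hcard f hf) (ht e he) (ht f hf)⟩

lemma IsTransversal.mem_pair_rankIn {r : ℕ} {e : Finset ℕ}
    (he : IsTransversal (fun i : Fin (r + 1) ↦ 2 * (i : ℕ)) e) (hcard : #e = r) {x : ℕ}
    (hx : x ∈ e) : 2 * rankIn e x - 1 ≤ x ∧ x ≤ 2 * rankIn e x := by
  have hrank : rankIn e x ≤ r := hcard ▸ rankIn_le_card e x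
  have hpos : 0 < rankIn e x := card_pos.2 ⟨x, by simp [hx]⟩
  have hupper : rankIn e (2 * rankIn e x) = rankIn e x := he ⟨rankIn e x, by omega⟩
  have hlower : rankIn e (2 * (rankIn e x - 1)) = rankIn e x - 1 :=
    he ⟨rankIn e x - 1, by omega⟩
  have hlt : 2 * (rankIn e x - 1) < x :=
    (monotone_rankIn e).reflect_lt (by omega)
  exact ⟨by omega, (rankIn_le_rankIn_iff hx).1 hupper.ge⟩

lemma IsClique.lt_of_rankIn_lt {r : ℕ} {K : Finset (Finset ℕ)}
    (hK : IsClique r {P | IsPartitePattern r P} K) {e f : Finset ℕ} (he : e ∈ K) (hf : f ∈ K)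
    {x y : ℕ} (hx : x ∈ e) (hy : y ∈ f) (hxy : rankIn e x < rankIn f y) : x < y := by
  obtain rfl | hef := eq_or_ne e f
  · exact (monotone_rankIn e).reflect_lt hxy
  obtain ⟨P, hP, φ, hφ, himage, rfl⟩ := hK.2.2 e he f hf hef
  have hpair : ∀ g ⊆ e ∪ f, g.image φ ∈ ({e.image φ, f.image φ} : Finset (Finset ℕ)) →
      ∀ z ∈ g, 2 * rankIn g z - 1 ≤ φ z ∧ φ z ≤ 2 * rankIn g z := by
    intro g hg hgP z hz
    have hφg : StrictMonoOn φ g := hφ.mono hg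
    have h0 : 0 ∉ g.image φ := fun h0 ↦ by simpa [himage] using image_subset_image hg h0
    have htrans := (forall_card_inter_pair_eq_one_iff_isTransversal h0 r).1 (hP.2 _ hgP)
    rw [← rankIn_image (b := φ z) hφg.injOn fun w hw ↦ hφg.le_iff_le hw hz]
    exact htrans.mem_pair_rankIn (hP.1.2.1 _ hgP) (mem_image_of_mem φ hz)
  have hφx := (hpair e subset_union_left (by simp) x hx).2
  have hφy := (hpair f subset_union_right (by simp) y hy).1
  exact (hφ.lt_iff_lt (by simp [hx]) (by simp [hy])).1 (by omega)

lemma IsClique.exists_isTransversal {r N : ℕ} {K : Finset (Finset ℕ)}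
    (hK : IsClique r {P | IsPartitePattern r P} K) (hN : ∀ e ∈ K, e ⊆ Icc 1 N) :
    ∃ t : Fin (r + 1) → ℕ, Monotone t ∧ (∀ i, t i ≤ N) ∧ ∀ e ∈ K, IsTransversal t e := by
  set t : Fin (r + 1) → ℕ := fun i ↦ K.sup fun e ↦ ({x ∈ e | rankIn e x ≤ i} : Finset ℕ).sup id
  have hle_t {e x i} (he : e ∈ K) (hx : x ∈ e) (hi : rankIn e x ≤ i.val) : x ≤ t i :=
    (le_sup (f := id) (mem_filter.2 ⟨hx, hi⟩)).trans
      (le_sup (f := fun e ↦ ({x ∈ e | rankIn e x ≤ i} : Finset ℕ).sup id) he)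
  have ht_le {i b} (h : ∀ e ∈ K, ∀ x ∈ e, rankIn e x ≤ i.val → x ≤ b) : t i ≤ b :=
    Finset.sup_le fun e he ↦ Finset.sup_le fun x hx ↦
      h e he x (mem_filter.1 hx).1 (mem_filter.1 hx).2
  refine ⟨t, fun i j hij ↦ ht_le fun e he x hx hi ↦ hle_t he hx (hi.trans hij),
    fun i ↦ ht_le fun e he x hx _ ↦ (mem_Icc.1 (hN e he hx)).2, fun e he i ↦ ?_⟩
  have hcut : ∀ x ∈ e, x ≤ t i ↔ rankIn e x ≤ i := by
    refine fun x hx ↦ ⟨fun hxt ↦ not_lt.1 fun hi ↦ ?_, hle_t he hx⟩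
    have hx1 := (mem_Icc.1 (hN e he hx)).1
    have : t i ≤ x - 1 := ht_le fun f hf y hy hyi ↦
      Nat.le_sub_one_of_lt (hK.lt_of_rankIn_lt hf he hy hx (hyi.trans_lt hi))
    omega
  rw [rankIn, filter_congr hcut, card_filter_rankIn_le (hK.1 e he ▸ i.is_le)]

lemma bddAbove_card_isClique (r : ℕ) (Ps : Set (Finset (Finset ℕ))) (M : Finset (Finset ℕ)) :
    BddAbove {k | ∃ K ⊆ M, IsClique r Ps K ∧ #K = k} :=
  ⟨#M, fun _ ⟨_, hKM, _, hk⟩ ↦ hk ▸ card_le_card hKM⟩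

lemma IsClique.card_le_zClique {r : ℕ} {Ps : Set (Finset (Finset ℕ))} {K M : Finset (Finset ℕ)}
    (hK : IsClique r Ps K) (hKM : K ⊆ M) : #K ≤ zClique r Ps M :=
  le_csSup (bddAbove_card_isClique r Ps M) ⟨K, hKM, hK, rfl⟩

lemma exists_isClique_card_eq_zClique (r : ℕ) (Ps : Set (Finset (Finset ℕ)))
    (M : Finset (Finset ℕ)) : ∃ K ⊆ M, IsClique r Ps K ∧ #K = zClique r Ps M :=
  Nat.sSup_mem (s := {k | ∃ K ⊆ M, IsClique r Ps K ∧ #K = k})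
    ⟨0, ∅, empty_subset M, by simp [IsClique], card_empty⟩ (bddAbove_card_isClique r Ps M)

lemma IsOrderedMatching.subset_Icc {r n : ℕ} {M : Finset (Finset ℕ)}
    (hM : IsOrderedMatching r n M) {e : Finset ℕ} (he : e ∈ M) : e ⊆ Icc 1 (r * n) :=
  hM.2.2.2 ▸ subset_biUnion_of_mem id he

/-- The family of all `r`-element subsets of `[N]` transversal to the cut points `t`. A largest
`r`-partite clique of a matching is its intersection with such a family for a suitable `t`. -/
noncomputable def transversals {r : ℕ} (N : ℕ) (t : Fin (r + 1) → ℕ) : Finset (Finset ℕ) :=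
  {e ∈ (Icc 1 N).powersetCard r | IsTransversal t e}

lemma transversals_subset {r : ℕ} (N : ℕ) (t : Fin (r + 1) → ℕ) :
    transversals N t ⊆ (Icc 1 N).powersetCard r := filter_subset _ _

lemma IsOrderedMatching.mem_transversals {r n : ℕ} {M : Finset (Finset ℕ)}
    (hM : IsOrderedMatching r n M) {t : Fin (r + 1) → ℕ} {e : Finset ℕ} (he : e ∈ M) :
    e ∈ transversals (r * n) t ↔ IsTransversal t e := by
  simp [transversals, mem_powersetCard, hM.subset_Icc he, hM.2.1 e he]

lemma IsOrderedMatching.card_transversals_le_zClique {r n : ℕ} (hr : 0 < r)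
    {M : Finset (Finset ℕ)} (hM : IsOrderedMatching r n M) (t : Fin (r + 1) → ℕ) :
    #{e ∈ transversals (r * n) t | e ∈ M} ≤ zClique r {P | IsPartitePattern r P} M := by
  have hsub : {e ∈ transversals (r * n) t | e ∈ M} ⊆ M := fun e he ↦ (mem_filter.1 he).2
  refine IsClique.card_le_zClique (isClique_of_isTransversal hr (fun e he ↦ hM.2.1 e (hsub he))
    (fun e he f hf ↦ hM.2.2.1 e (hsub he) f (hsub hf)) (t := t) fun e he ↦ ?_) hsub
  exact (hM.mem_transversals (hsub he)).1 (mem_filter.1 he).1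

lemma IsOrderedMatching.exists_zClique_le_card_transversals {r n : ℕ} {M : Finset (Finset ℕ)}
    (hM : IsOrderedMatching r n M) : ∃ t : Fin (r + 1) → ℕ, Monotone t ∧ (∀ i, t i ≤ r * n) ∧
      zClique r {P | IsPartitePattern r P} M ≤ #{e ∈ transversals (r * n) t | e ∈ M} := by
  obtain ⟨K, hKM, hK, hcard⟩ := exists_isClique_card_eq_zClique r {P | IsPartitePattern r P} M
  obtain ⟨t, ht, htN, htK⟩ := hK.exists_isTransversal fun e he ↦ hM.subset_Icc (hKM he)
  refine ⟨t, ht, htN, hcard ▸ card_le_card fun e he ↦ mem_filter.2 ⟨?_, hKM he⟩⟩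
  exact (hM.mem_transversals (hKM he)).2 (htK e he)

lemma IsOrderedMatching.card_transversals_le_add {r n B : ℕ} {M : Finset (Finset ℕ)}
    (hM : IsOrderedMatching r n M) {s t : Fin (r + 1) → ℕ} (hst : ∀ i, s i ≤ t i)
    (hts : ∀ i, t i ≤ s i + B) :
    #{e ∈ transversals (r * n) t | e ∈ M} ≤
      #{e ∈ transversals (r * n) s | e ∈ M} + (r + 1) * B := by
  set D := univ.biUnion fun i ↦ Ioc (s i) (t i)
  have hD : #D ≤ (r + 1) * B := by
    refine card_biUnion_le.trans ((sum_le_card_nsmul _ _ B fun i _ ↦ ?_).trans (by simp))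
    rw [Nat.card_Ioc, Nat.sub_le_iff_le_add']
    exact hts i
  have hmeet : #{e ∈ M | ¬ Disjoint e D} ≤ #D := by
    refine (card_le_card_biUnion (s := {e ∈ M | ¬ Disjoint e D}) (f := (· ∩ D)) ?_ ?_).trans
      (card_le_card (biUnion_subset.2 fun e _ ↦ inter_subset_right))
    · intro e he f hf hef
      exact (hM.2.2.1 e (mem_filter.1 he).1 f (mem_filter.1 hf).1 hef).mono inter_subset_left
        inter_subset_left
    · exact fun e he ↦ not_disjoint_iff_nonempty_inter.1 (mem_filter.1 he).2
  refine (card_le_card fun e he ↦ ?_).trans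
    ((card_union_le _ {e ∈ M | ¬ Disjoint e D}).trans (add_le_add_right (hmeet.trans hD) _))
  obtain ⟨het, heM⟩ := mem_filter.1 he
  by_cases heD : Disjoint e D
  · refine mem_union_left _ (mem_filter.2 ⟨(hM.mem_transversals heM).2 fun i ↦ ?_, heM⟩)
    rw [rankIn_congr (hst i) ((disjoint_biUnion_right _ _ _).1 heD i (mem_univ i))]
    exact (hM.mem_transversals heM).1 het i
  · exact mem_union_right _ (mem_filter.2 ⟨heM, heD⟩)

/-! ### Counting transversal sets -/

section CardTransversals

variable {r : ℕ} {t : Fin (r + 1) → ℕ}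

lemma strictMono_of_mem_Ioc (ht : Monotone t) {a : Fin r → ℕ}
    (ha : ∀ i, a i ∈ Ioc (t i.castSucc) (t i.succ)) : StrictMono a := fun i j hij ↦
  calc a i ≤ t i.succ := (mem_Ioc.1 (ha i)).2
    _ ≤ t j.castSucc := ht (Fin.succ_le_castSucc_iff.2 hij)
    _ < a j := (mem_Ioc.1 (ha j)).1

lemma isTransversal_image (ht : Monotone t) {a : Fin r → ℕ}
    (ha : ∀ i, a i ∈ Ioc (t i.castSucc) (t i.succ)) : IsTransversal t (univ.image a) := by
  intro i
  have hcut : ∀ j, a j ≤ t i ↔ (j : ℕ) < i := fun j ↦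
    ⟨fun h ↦ ht.reflect_lt ((mem_Ioc.1 (ha j)).1.trans_le h), fun h ↦
      (mem_Ioc.1 (ha j)).2.trans (ht (Fin.le_def.2 h))⟩
  rw [rankIn, filter_image, card_image_of_injective _ (strictMono_of_mem_Ioc ht ha).injective,
    filter_congr fun j _ ↦ hcut j, Fin.card_filter_val_lt, min_eq_right i.is_le]

lemma exists_image_eq_of_isTransversal (ht : Monotone t) {e : Finset ℕ} (he : IsTransversal t e)
    (hcard : #e = r) : ∃ a : Fin r → ℕ,
      (∀ i, a i ∈ Ioc (t i.castSucc) (t i.succ)) ∧ univ.image a = e := by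
  have hlt (i : Fin r) : rankIn e (t i.castSucc) < rankIn e (t i.succ) := by simp [he _]
  choose a hae ha using fun i ↦ exists_mem_Ioc_of_rankIn_lt (hlt i)
  refine ⟨a, ha, eq_of_subset_of_card_le (image_subset_iff.2 fun i _ ↦ hae i) ?_⟩
  rw [card_image_of_injective _ (strictMono_of_mem_Ioc ht ha).injective, card_fin, hcard]

lemma card_transversals {N : ℕ} (ht : Monotone t) (hN : ∀ i, t i ≤ N) :
    #(transversals N t) = ∏ i : Fin r, (t i.succ - t i.castSucc) := by
  have hmem {a : Fin r → ℕ} : a ∈ Fintype.piFinset (fun i ↦ Ioc (t i.castSucc) (t i.succ)) ↔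
      ∀ i, a i ∈ Ioc (t i.castSucc) (t i.succ) := Fintype.mem_piFinset
  have himage : (Fintype.piFinset fun i : Fin r ↦ Ioc (t i.castSucc) (t i.succ)).image
      (univ.image ·) = transversals N t := by
    ext e
    simp only [mem_image, hmem, transversals, mem_filter, mem_powersetCard]
    refine ⟨?_, fun ⟨⟨_, hcard⟩, he⟩ ↦ exists_image_eq_of_isTransversal ht he hcard⟩
    rintro ⟨a, ha, rfl⟩
    refine ⟨⟨image_subset_iff.2 fun i _ ↦ ?_, ?_⟩, isTransversal_image ht ha⟩
    · have := mem_Ioc.1 (ha i)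
      exact mem_Icc.2 ⟨by omega, this.2.trans (hN _)⟩
    · rw [card_image_of_injective _ (strictMono_of_mem_Ioc ht ha).injective, card_fin]
  rw [← himage, card_image_of_injOn, Fintype.card_piFinset]
  · simp only [Nat.card_Ioc]
  · intro a ha b hb hab
    refine ((strictMono_of_mem_Ioc ht (hmem.1 ha)).range_inj
      (strictMono_of_mem_Ioc ht (hmem.1 hb))).1 ?_
    simpa using congrArg ((↑) : Finset ℕ → Set ℕ) hab

end CardTransversals

lemma card_transversals_equipartition (r n : ℕ) :
    #(transversals (r * n) fun i : Fin (r + 1) ↦ i * n) = n ^ r := by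
  rw [card_transversals]
  · simp [add_mul]
  · exact fun i j hij ↦ Nat.mul_le_mul_right n hij
  · exact fun i ↦ Nat.mul_le_mul_right n i.is_le

lemma prod_le_pow_card_of_sum_le {ι : Type*} {s : Finset ι} {x : ι → ℝ} {c : ℝ}
    (hx : ∀ i ∈ s, 0 ≤ x i) (hsum : ∑ i ∈ s, x i ≤ #s * c) : ∏ i ∈ s, x i ≤ c ^ #s := by
  obtain rfl | hs := s.eq_empty_or_nonempty
  · simp
  have hcard : (0 : ℝ) < #s := by exact_mod_cast hs.card_pos
  have hamgm : (∏ i ∈ s, x i) ^ (#s : ℝ)⁻¹ ≤ (∑ i ∈ s, x i) / #s := by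
    simpa using Real.geom_mean_le_arith_mean s 1 x (by simp) (by simpa using hs) hx
  have hmean : (∏ i ∈ s, x i) ^ (#s : ℝ)⁻¹ ≤ c := hamgm.trans ((div_le_iff₀' hcard).2 hsum)
  calc ∏ i ∈ s, x i = ((∏ i ∈ s, x i) ^ (#s : ℝ)⁻¹) ^ #s :=
        (Real.rpow_inv_natCast_pow (prod_nonneg hx) hs.card_ne_zero).symm
    _ ≤ c ^ #s := pow_le_pow_left₀ (Real.rpow_nonneg (prod_nonneg hx) _) hmean _

lemma card_transversals_le {r n : ℕ} {t : Fin (r + 1) → ℕ} (ht : Monotone t)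
    (hn : ∀ i, t i ≤ r * n) : #(transversals (r * n) t) ≤ n ^ r := by
  have hsum : ∑ i : Fin r, (t i.succ - t i.castSucc) ≤ r * n := by
    have htel := (Fin.sum_univ_castSucc t).symm.trans (Fin.sum_univ_succ t)
    have hlast := hn (Fin.last r)
    rw [sum_tsub_distrib _ fun i _ ↦ ht i.castSucc_le_succ]
    omega
  have hprod := prod_le_pow_card_of_sum_le (s := univ) (c := n)
    (x := fun i : Fin r ↦ ((t i.succ - t i.castSucc : ℕ) : ℝ)) (fun i _ ↦ Nat.cast_nonneg _)
    (by rw [card_fin]; exact_mod_cast hsum)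
  rw [card_fin] at hprod
  rw [card_transversals ht hn]
  exact_mod_cast hprod

/-! ### Counting ordered matchings -/

section MatchingsOn

variable {α : Type*} [DecidableEq α] {r : ℕ} {V e f : Finset α} {M : Finset (Finset α)}

/-- The partitions of the finite set `V` into `r`-element sets. Ordered matchings are the case
`V = {1, …, rn}`; general `V` makes it possible to remove the vertices of one edge. -/
def matchingsOn (r : ℕ) (V : Finset α) : Finset (Finset (Finset α)) :=
  {M ∈ (V.powersetCard r).powerset |
    (∀ e ∈ M, ∀ f ∈ M, e ≠ f → Disjoint e f) ∧ M.biUnion id = V}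

lemma mem_matchingsOn : M ∈ matchingsOn r V ↔ (∀ e ∈ M, #e = r) ∧
    (∀ e ∈ M, ∀ f ∈ M, e ≠ f → Disjoint e f) ∧ M.biUnion id = V := by
  simp only [matchingsOn, mem_filter, mem_powerset, and_congr_left_iff]
  rintro ⟨-, rfl⟩
  exact ⟨fun h e he ↦ (mem_powersetCard.1 (h he)).2, fun h e he ↦
    mem_powersetCard.2 ⟨subset_biUnion_of_mem id he, h e he⟩⟩

lemma mem_powersetCard_of_mem_matchingsOn (hM : M ∈ matchingsOn r V) (he : e ∈ M) :
    e ∈ V.powersetCard r :=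
  mem_powerset.1 (mem_filter.1 hM).1 he

lemma card_mul_of_mem_matchingsOn (hM : M ∈ matchingsOn r V) : #M * r = #V := by
  obtain ⟨hcard, hdisj, rfl⟩ := mem_matchingsOn.1 hM
  exact ((card_biUnion hdisj).trans (sum_const_nat hcard)).symm

lemma notMem_of_mem_matchingsOn_sdiff (hr : 0 < r) (he : #e = r)
    (hM : M ∈ matchingsOn r (V \ e)) : e ∉ M := fun heM ↦ by
  have hsub := (mem_powersetCard.1 (mem_powersetCard_of_mem_matchingsOn hM heM)).1
  have : Disjoint e e := disjoint_sdiff.mono_right hsub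
  simp_all

lemma insert_mem_matchingsOn (he : e ∈ V.powersetCard r) (hM : M ∈ matchingsOn r (V \ e)) :
    insert e M ∈ matchingsOn r V := by
  obtain ⟨heV, hcard⟩ := mem_powersetCard.1 he
  obtain ⟨hMcard, hdisj, hunion⟩ := mem_matchingsOn.1 hM
  have hMe : ∀ f ∈ M, Disjoint e f := fun f hf ↦ disjoint_sdiff.mono_right
    (mem_powersetCard.1 (mem_powersetCard_of_mem_matchingsOn hM hf)).1
  refine mem_matchingsOn.2 ⟨forall_mem_insert .. |>.2 ⟨hcard, hMcard⟩, ?_, ?_⟩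
  · simp only [forall_mem_insert]
    exact ⟨⟨fun h ↦ absurd rfl h, fun f hf _ ↦ hMe f hf⟩,
      fun f hf ↦ ⟨fun _ ↦ (hMe f hf).symm, hdisj f hf⟩⟩
  · rw [biUnion_insert, hunion, id, union_sdiff_of_subset heV]

lemma erase_mem_matchingsOn (hM : M ∈ matchingsOn r V) (he : e ∈ M) :
    M.erase e ∈ matchingsOn r (V \ e) := by
  obtain ⟨hcard, hdisj, rfl⟩ := mem_matchingsOn.1 hM
  refine mem_matchingsOn.2 ⟨fun f hf ↦ hcard f (mem_of_mem_erase hf), fun f hf g hg ↦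
    hdisj f (mem_of_mem_erase hf) g (mem_of_mem_erase hg), ?_⟩
  have hcompl : Disjoint ((M.erase e).biUnion id) e := (disjoint_biUnion_left _ _ _).2 fun f hf ↦
    hdisj f (mem_of_mem_erase hf) e he (ne_of_mem_erase hf)
  nth_rw 2 [← insert_erase he]
  rw [biUnion_insert, id, union_sdiff_cancel_left hcompl.symm]

lemma image_insert_matchingsOn (he : e ∈ V.powersetCard r) :
    (matchingsOn r (V \ e)).image (insert e) = {M ∈ matchingsOn r V | e ∈ M} := by
  ext M
  rw [mem_image, mem_filter]
  constructor
  · rintro ⟨M, hM, rfl⟩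
    exact ⟨insert_mem_matchingsOn he hM, mem_insert_self e M⟩
  · rintro ⟨hM, heM⟩
    exact ⟨M.erase e, erase_mem_matchingsOn hM heM, insert_erase heM⟩

lemma injOn_insert_matchingsOn (hr : 0 < r) (he : #e = r) :
    Set.InjOn (insert e) (matchingsOn r (V \ e) : Set (Finset (Finset α))) :=
  fun M hM N hN h ↦ by
    rw [← erase_insert (notMem_of_mem_matchingsOn_sdiff hr he hM), h,
      erase_insert (notMem_of_mem_matchingsOn_sdiff hr he hN)]

lemma card_filter_mem_matchingsOn (hr : 0 < r) (he : e ∈ V.powersetCard r) :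
    #{M ∈ matchingsOn r V | e ∈ M} = #(matchingsOn r (V \ e)) := by
  rw [← image_insert_matchingsOn he,
    card_image_of_injOn (injOn_insert_matchingsOn hr (mem_powersetCard.1 he).2)]

lemma card_filter_mem_and_mem_matchingsOn (hr : 0 < r) (he : e ∈ V.powersetCard r)
    (hf : f ∈ V.powersetCard r) (hef : Disjoint e f) :
    #{M ∈ matchingsOn r V | e ∈ M ∧ f ∈ M} = #(matchingsOn r ((V \ e) \ f)) := by
  obtain ⟨heV, hecard⟩ := mem_powersetCard.1 he
  obtain ⟨hfV, hfcard⟩ := mem_powersetCard.1 hf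
  have hfe : f ≠ e := by
    rintro rfl
    simp_all
  rw [← card_filter_mem_matchingsOn hr
      (mem_powersetCard.2 ⟨subset_sdiff.2 ⟨hfV, hef.symm⟩, hfcard⟩),
    ← filter_filter, ← image_insert_matchingsOn he, filter_image,
    card_image_of_injOn ((injOn_insert_matchingsOn hr hecard).mono (filter_subset _ _))]
  simp [hfe]

lemma card_matchingsOn_mul_eq_sum (hr : 0 < r) {n : ℕ} (hV : #V = r * n) :
    #(matchingsOn r V) * n = ∑ e ∈ V.powersetCard r, #(matchingsOn r (V \ e)) := by
  have hcard : ∀ M ∈ matchingsOn r V, #{e ∈ V.powersetCard r | e ∈ M} = n := by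
    intro M hM
    rw [filter_mem_eq_inter, inter_eq_right.2 fun e ↦ mem_powersetCard_of_mem_matchingsOn hM]
    exact Nat.eq_of_mul_eq_mul_right hr (by rw [card_mul_of_mem_matchingsOn hM, hV, mul_comm])
  calc #(matchingsOn r V) * n
      = ∑ M ∈ matchingsOn r V, #{e ∈ V.powersetCard r | e ∈ M} := (sum_const_nat hcard).symm
    _ = ∑ e ∈ V.powersetCard r, #{M ∈ matchingsOn r V | e ∈ M} :=
        sum_card_bipartiteAbove_eq_sum_card_bipartiteBelow fun M e ↦ e ∈ M
    _ = ∑ e ∈ V.powersetCard r, #(matchingsOn r (V \ e)) :=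
        sum_congr rfl fun e he ↦ card_filter_mem_matchingsOn hr he

end MatchingsOn

lemma uniformBell_pos {r : ℕ} (hr : 0 < r) (n : ℕ) : 0 < Nat.uniformBell n r := by
  refine Nat.pos_of_ne_zero fun h ↦ (n * r).factorial_ne_zero ?_
  rw [← Nat.uniformBell_mul_eq n hr.ne', h, zero_mul, zero_mul]

lemma uniformBell_add_one_mul {r : ℕ} (hr : 0 < r) (n : ℕ) :
    Nat.uniformBell (n + 1) r * (n + 1) = (r * (n + 1)).choose r * Nat.uniformBell n r := by
  obtain ⟨k, rfl⟩ := Nat.exists_eq_add_of_le' hr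
  have hsize : n * (k + 1) + k + 1 = (k + 1) * (n + 1) := by ring
  have hchoose : (n + 1) * (n * (k + 1) + k).choose k = ((k + 1) * (n + 1)).choose (k + 1) := by
    refine Nat.eq_of_mul_eq_mul_right k.add_one_pos ?_
    rw [← hsize, ← Nat.add_one_mul_choose_eq, hsize]
    ring
  rw [Nat.uniformBell_succ_left, ← hchoose, mul_comm, ← mul_assoc]
  rfl

lemma card_matchingsOn {α : Type*} [DecidableEq α] {r n : ℕ} (hr : 0 < r) {V : Finset α}
    (hV : #V = r * n) : #(matchingsOn r V) = Nat.uniformBell n r := by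
  induction n generalizing V with
  | zero =>
    obtain rfl : V = ∅ := card_eq_zero.1 hV
    rw [Nat.uniformBell_zero_left, card_eq_one]
    refine ⟨∅, eq_singleton_iff_unique_mem.2 ⟨by simp [mem_matchingsOn], fun M hM ↦ ?_⟩⟩
    exact card_eq_zero.1 (Nat.eq_of_mul_eq_mul_right hr (by simp [card_mul_of_mem_matchingsOn hM]))
  | succ n ih =>
    refine Nat.eq_of_mul_eq_mul_right n.add_one_pos ?_
    have hrest : ∀ e ∈ V.powersetCard r, #(matchingsOn r (V \ e)) = Nat.uniformBell n r := by
      intro e he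
      obtain ⟨heV, hecard⟩ := mem_powersetCard.1 he
      exact ih (by rw [card_sdiff_of_subset heV, hV, hecard, mul_add_one, Nat.add_sub_cancel])
    rw [card_matchingsOn_mul_eq_sum hr hV, sum_const_nat hrest, card_powersetCard, hV,
      uniformBell_add_one_mul hr]

/-! ### The uniform random ordered matching -/

section Probability

variable {r n : ℕ}

lemma mem_matchingFamilies {M : Finset (Finset ℕ)} :
    M ∈ matchingFamilies r n ↔ IsOrderedMatching r n M := by
  simp only [matchingFamilies, mem_filter, mem_powerset, and_iff_right_iff_imp]
  exact fun hM e he ↦ mem_powerset.2 (hM.subset_Icc he)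

lemma matchingFamilies_eq_matchingsOn (hr : 0 < r) (n : ℕ) :
    matchingFamilies r n = matchingsOn r (Icc 1 (r * n)) := by
  ext M
  rw [mem_matchingFamilies, IsOrderedMatching, and_iff_right_of_imp, mem_matchingsOn]
  intro hM
  have hcard := card_mul_of_mem_matchingsOn (mem_matchingsOn.2 hM)
  rw [Nat.card_Icc, Nat.add_sub_cancel, mul_comm] at hcard
  exact Nat.eq_of_mul_eq_mul_left hr hcard

lemma card_matchingFamilies (hr : 0 < r) (n : ℕ) :
    #(matchingFamilies r n) = Nat.uniformBell n r := by
  rw [matchingFamilies_eq_matchingsOn hr, card_matchingsOn hr (n := n) (by simp)]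

lemma card_matchingFamilies_pos (hr : 0 < r) (n : ℕ) : (0 : ℝ) < #(matchingFamilies r n) := by
  exact_mod_cast card_matchingFamilies hr n ▸ uniformBell_pos hr n

lemma prob_eq_card_div (r n : ℕ) (A : Finset (Finset ℕ) → Prop) [DecidablePred A] :
    prob r n A = #{M ∈ matchingFamilies r n | A M} / #(matchingFamilies r n) := by
  rw [prob]
  congr!

lemma prob_nonneg (r n : ℕ) (A : Finset (Finset ℕ) → Prop) : 0 ≤ prob r n A := by
  unfold prob
  positivity

lemma prob_mono {A B : Finset (Finset ℕ) → Prop} (h : ∀ M, A M → B M) :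
    prob r n A ≤ prob r n B :=
  div_le_div_of_nonneg_right
    (by exact_mod_cast card_le_card (monotone_filter_right _ fun M _ ↦ h M)) (Nat.cast_nonneg _)

lemma prob_eq_zero {A : Finset (Finset ℕ) → Prop} (h : ∀ M, IsOrderedMatching r n M → ¬ A M) :
    prob r n A = 0 := by
  rw [prob, filter_eq_empty_iff.2 fun M hM ↦ h M (mem_matchingFamilies.1 hM), card_empty,
    Nat.cast_zero, zero_div]

lemma prob_or_le (A B : Finset (Finset ℕ) → Prop) :
    prob r n (fun M ↦ A M ∨ B M) ≤ prob r n A + prob r n B := by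
  simp_rw [prob_eq_card_div, ← add_div, filter_or]
  exact div_le_div_of_nonneg_right (by exact_mod_cast card_union_le _ _) (Nat.cast_nonneg _)

lemma prob_add_prob_not (hr : 0 < r) (A : Finset (Finset ℕ) → Prop) :
    prob r n A + prob r n (fun M ↦ ¬ A M) = 1 := by
  rw [prob_eq_card_div, prob_eq_card_div, ← add_div,
    div_eq_one_iff_eq (card_matchingFamilies_pos hr n).ne']
  exact_mod_cast card_filter_add_card_filter_not A

/-- The probability that a given `r`-subset of `[rn]` is an edge of a uniformly random ordered
`r`-matching of size `n`, which has `n` of the `(rn).choose r` possible edges. -/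
noncomputable def edgeProb (r n : ℕ) : ℝ := n / (r * n).choose r

lemma edgeProb_nonneg (r n : ℕ) : 0 ≤ edgeProb r n := by
  unfold edgeProb
  positivity

lemma choose_mul_edgeProb (r n : ℕ) : (r * n).choose r * edgeProb r n = n := by
  obtain rfl | hn := n.eq_zero_or_pos
  · simp [edgeProb]
  · have := Nat.choose_pos (Nat.le_mul_of_pos_right r hn)
    rw [edgeProb, mul_div_cancel₀]
    positivity

lemma uniformBell_eq_edgeProb_mul (hr : 0 < r) (n : ℕ) :
    (Nat.uniformBell n r : ℝ) = edgeProb r (n + 1) * Nat.uniformBell (n + 1) r := by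
  have hrec : (Nat.uniformBell (n + 1) r : ℝ) * (n + 1) =
      (r * (n + 1)).choose r * Nat.uniformBell n r := by
    exact_mod_cast uniformBell_add_one_mul hr n
  have hchoose := Nat.choose_pos (Nat.le_mul_of_pos_right r n.add_one_pos)
  rw [edgeProb, div_mul_eq_mul_div, eq_div_iff (by positivity)]
  push_cast
  linarith

lemma prob_mem (hr : 0 < r) {e : Finset ℕ} (he : e ∈ (Icc 1 (r * n)).powersetCard r) :
    prob r n (e ∈ ·) = edgeProb r n := by
  obtain ⟨heV, hcard⟩ := mem_powersetCard.1 he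
  obtain _ | n := n
  · simp_all
  have hrest : #(Icc 1 (r * (n + 1)) \ e) = r * n := by
    rw [card_sdiff_of_subset heV, hcard, Nat.card_Icc, mul_add_one]
    omega
  have hpos := card_matchingFamilies_pos hr (n + 1)
  rw [prob_eq_card_div, div_eq_iff hpos.ne', card_matchingFamilies hr,
    matchingFamilies_eq_matchingsOn hr, card_filter_mem_matchingsOn hr he,
    card_matchingsOn hr hrest, uniformBell_eq_edgeProb_mul hr]

lemma prob_mem_and_mem (hr : 0 < r) {e f : Finset ℕ} (he : e ∈ (Icc 1 (r * n)).powersetCard r)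
    (hf : f ∈ (Icc 1 (r * n)).powersetCard r) (hef : Disjoint e f) :
    prob r n (fun M ↦ e ∈ M ∧ f ∈ M) = edgeProb r n * edgeProb r (n - 1) := by
  obtain ⟨heV, hecard⟩ := mem_powersetCard.1 he
  obtain ⟨hfV, hfcard⟩ := mem_powersetCard.1 hf
  have hsize : r + r ≤ r * n := by
    simpa [card_union_of_disjoint hef, hecard, hfcard] using card_le_card (union_subset heV hfV)
  obtain ⟨n, rfl⟩ : ∃ k, n = k + 2 := Nat.exists_eq_add_of_le'
    (Nat.le_of_mul_le_mul_left (by rwa [mul_two]) hr)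
  have hrest : #((Icc 1 (r * (n + 2)) \ e) \ f) = r * n := by
    rw [card_sdiff_of_subset (subset_sdiff.2 ⟨hfV, hef.symm⟩), card_sdiff_of_subset heV, hecard,
      hfcard, Nat.card_Icc, mul_add, mul_two]
    omega
  have hpos := card_matchingFamilies_pos hr (n + 2)
  rw [prob_eq_card_div, div_eq_iff hpos.ne', card_matchingFamilies hr,
    matchingFamilies_eq_matchingsOn hr, card_filter_mem_and_mem_matchingsOn hr he hf hef,
    card_matchingsOn hr hrest, uniformBell_eq_edgeProb_mul hr, uniformBell_eq_edgeProb_mul hr,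
    show n + 2 - 1 = n + 1 from rfl]
  ring

lemma prob_mem_and_mem_le (hr : 0 < r) {e f : Finset ℕ}
    (he : e ∈ (Icc 1 (r * n)).powersetCard r) (hf : f ∈ (Icc 1 (r * n)).powersetCard r)
    (hne : e ≠ f) :
    prob r n (fun M ↦ e ∈ M ∧ f ∈ M) ≤ edgeProb r n * edgeProb r (n - 1) := by
  by_cases hef : Disjoint e f
  · exact (prob_mem_and_mem hr he hf hef).le
  · rw [prob_eq_zero fun M hM ⟨heM, hfM⟩ ↦ hef (hM.2.2.1 e heM f hfM hne)]
    exact mul_nonneg (edgeProb_nonneg r n) (edgeProb_nonneg r (n - 1))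

lemma expect_add (X Y : Finset (Finset ℕ) → ℝ) :
    _root_.expect r n (fun M ↦ X M + Y M) = _root_.expect r n X + _root_.expect r n Y := by
  simp only [_root_.expect, sum_add_distrib, add_div]

lemma expect_const_mul (c : ℝ) (X : Finset (Finset ℕ) → ℝ) :
    _root_.expect r n (fun M ↦ c * X M) = c * _root_.expect r n X := by
  simp only [_root_.expect, ← mul_sum, mul_div_assoc]

lemma expect_const (hr : 0 < r) (c : ℝ) : _root_.expect r n (fun _ ↦ c) = c := by
  rw [_root_.expect, sum_const, nsmul_eq_mul,
    mul_div_cancel_left₀ _ (card_matchingFamilies_pos hr n).ne']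

lemma expect_card_filter {ι : Type*} (s : Finset ι) (A : ι → Finset (Finset ℕ) → Prop)
    [∀ M, DecidablePred (A · M)] :
    _root_.expect r n (fun M ↦ (#{i ∈ s | A i M} : ℝ)) = ∑ i ∈ s, prob r n (A i) := by
  rw [_root_.expect, sum_congr rfl fun i _ ↦ prob_eq_card_div r n (A i), ← sum_div]
  congr 1
  exact_mod_cast sum_card_bipartiteAbove_eq_sum_card_bipartiteBelow fun M i ↦ A i M

lemma expect_sub_sq (hr : 0 < r) (X : Finset (Finset ℕ) → ℝ) :
    _root_.expect r n (fun M ↦ (X M - _root_.expect r n X) ^ 2) =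
      _root_.expect r n (fun M ↦ X M ^ 2) - _root_.expect r n X ^ 2 := by
  set μ := _root_.expect r n X with hμ
  have hsq : (fun M ↦ (X M - μ) ^ 2) = fun M ↦ X M ^ 2 + ((-2 * μ) * X M + μ ^ 2) := by
    funext M
    ring
  rw [hsq, expect_add, expect_add, expect_const_mul, expect_const hr, ← hμ]
  ring

lemma prob_abs_sub_gt_le (X : Finset (Finset ℕ) → ℝ) (μ : ℝ) {c : ℝ} (hc : 0 < c) :
    prob r n (fun M ↦ c < |X M - μ|) ≤ _root_.expect r n (fun M ↦ (X M - μ) ^ 2) / c ^ 2 := by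
  rw [le_div_iff₀ (by positivity), prob, _root_.expect, div_mul_eq_mul_div]
  refine div_le_div_of_nonneg_right ?_ (Nat.cast_nonneg _)
  rw [← nsmul_eq_mul]
  refine (card_nsmul_le_sum _ (fun M ↦ (X M - μ) ^ 2) _ fun M hM ↦ ?_).trans
    (sum_le_sum_of_subset_of_nonneg (filter_subset _ _) fun M _ _ ↦ sq_nonneg _)
  rw [← sq_abs (X M - μ)]
  exact pow_le_pow_left₀ hc.le (mem_filter.1 hM).2.le 2

variable {T : Finset (Finset ℕ)}

lemma expect_card_edges (hr : 0 < r) (hT : T ⊆ (Icc 1 (r * n)).powersetCard r) :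
    _root_.expect r n (fun M ↦ (#{e ∈ T | e ∈ M} : ℝ)) = #T * edgeProb r n := by
  rw [expect_card_filter, sum_congr rfl fun e he ↦ prob_mem hr (hT he), sum_const, nsmul_eq_mul]

lemma expect_card_edges_sq_le (hr : 0 < r) (hT : T ⊆ (Icc 1 (r * n)).powersetCard r) :
    _root_.expect r n (fun M ↦ (#{e ∈ T | e ∈ M} : ℝ) ^ 2) ≤
      #T * edgeProb r n + #T ^ 2 * (edgeProb r n * edgeProb r (n - 1)) := by
  have hpairs (M : Finset (Finset ℕ)) :
      (#{e ∈ T | e ∈ M} : ℝ) ^ 2 = #{p ∈ T ×ˢ T | p.1 ∈ M ∧ p.2 ∈ M} := by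
    rw [filter_product (· ∈ M) (· ∈ M), card_product, Nat.cast_mul, sq]
  have hprob : ∀ e ∈ T, ∀ f ∈ T, prob r n (fun M ↦ e ∈ M ∧ f ∈ M) ≤
      (if e = f then edgeProb r n else 0) + edgeProb r n * edgeProb r (n - 1) := by
    intro e he f hf
    split_ifs with hef
    · simp only [← hef, and_self, prob_mem hr (hT he), le_add_iff_nonneg_right]
      exact mul_nonneg (edgeProb_nonneg r n) (edgeProb_nonneg r (n - 1))
    · rw [zero_add]
      exact prob_mem_and_mem_le hr (hT he) (hT hf) hef
  calc _root_.expect r n (fun M ↦ (#{e ∈ T | e ∈ M} : ℝ) ^ 2)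
      = ∑ p ∈ T ×ˢ T, prob r n (fun M ↦ p.1 ∈ M ∧ p.2 ∈ M) := by
        simp only [hpairs]
        exact expect_card_filter (T ×ˢ T) fun p M ↦ p.1 ∈ M ∧ p.2 ∈ M
    _ ≤ ∑ e ∈ T, ∑ f ∈ T,
          ((if e = f then edgeProb r n else 0) + edgeProb r n * edgeProb r (n - 1)) := by
        rw [sum_product]
        exact sum_le_sum fun e he ↦ sum_le_sum fun f hf ↦ hprob e he f hf
    _ = #T * edgeProb r n + #T ^ 2 * (edgeProb r n * edgeProb r (n - 1)) := by
        simp only [sum_add_distrib, sum_ite_eq, sum_const, nsmul_eq_mul, ← sum_filter,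
          filter_mem_eq_inter, inter_self]
        ring

lemma card_mul_edgeProb_le (hT : T ⊆ (Icc 1 (r * n)).powersetCard r) :
    #T * edgeProb r n ≤ n := by
  rw [← choose_mul_edgeProb r n]
  refine mul_le_mul_of_nonneg_right ?_ (edgeProb_nonneg r n)
  simpa using Nat.cast_le (α := ℝ).2 (card_le_card hT)

lemma variance_card_edges_le (hr : 0 < r) (hT : T ⊆ (Icc 1 (r * n)).powersetCard r) :
    _root_.expect r n (fun M ↦ ((#{e ∈ T | e ∈ M} : ℝ) - #T * edgeProb r n) ^ 2) ≤
      n + n ^ 2 * |edgeProb r (n - 1) / edgeProb r n - 1| := by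
  set p := edgeProb r n
  set q := edgeProb r (n - 1)
  have hmean : #T * p ≤ n := card_mul_edgeProb_le hT
  have hmean_nonneg : 0 ≤ #T * p := mul_nonneg (Nat.cast_nonneg _) (edgeProb_nonneg r n)
  have hcov : #T ^ 2 * (p * q) - (#T * p) ^ 2 = (#T * p) ^ 2 * (q / p - 1) := by
    obtain hp | hp := eq_or_ne p 0
    · simp [hp]
    · field_simp
  rw [← expect_card_edges hr hT, expect_sub_sq hr, expect_card_edges hr hT]
  calc _root_.expect r n (fun M ↦ (#{e ∈ T | e ∈ M} : ℝ) ^ 2) - (#T * p) ^ 2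
      ≤ #T * p + (#T * p) ^ 2 * (q / p - 1) := by linarith [expect_card_edges_sq_le hr hT]
    _ ≤ #T * p + (#T * p) ^ 2 * |q / p - 1| := by
        gcongr
        exact le_abs_self _
    _ ≤ n + n ^ 2 * |q / p - 1| := by gcongr

end Probability

/-! ### Asymptotically almost sure events -/

section Aas

open Filter Topology

variable {r : ℕ}

/-- The filter of asymptotically almost sure events: `∀ᶠ p in aas r, A p.1 p.2` says that the
probability that a uniformly random ordered `r`-matching of size `n` violates `A n` tends to `0`
as `n → ∞`. Its elements are pairs of a size and a family of edges. -/
def aas (r : ℕ) : Filter (ℕ × Finset (Finset ℕ)) :=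
  comk (fun S ↦ Tendsto (fun n ↦ prob r n fun M ↦ (n, M) ∈ S) atTop (𝓝 0))
    (by simp [prob])
    (fun _ hT _ hST ↦ squeeze_zero (fun n ↦ prob_nonneg r n _)
      (fun _ ↦ prob_mono fun _ h ↦ hST h) hT)
    (fun _ hS _ hT ↦ squeeze_zero (fun n ↦ prob_nonneg r n _) (fun _ ↦ prob_or_le _ _)
      (by simpa using hS.add hT))

lemma eventually_aas {A : ℕ → Finset (Finset ℕ) → Prop} :
    (∀ᶠ p in aas r, A p.1 p.2) ↔ Tendsto (fun n ↦ prob r n fun M ↦ ¬ A n M) atTop (𝓝 0) :=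
  Iff.rfl

lemma tendsto_prob_of_eventually_aas (hr : 0 < r) {A : ℕ → Finset (Finset ℕ) → Prop}
    (hA : ∀ᶠ p in aas r, A p.1 p.2) : Tendsto (fun n ↦ prob r n (A n)) atTop (𝓝 1) := by
  have hcompl := (eventually_aas.1 hA).const_sub 1
  rw [sub_zero] at hcompl
  exact hcompl.congr fun n ↦ sub_eq_of_eq_add (prob_add_prob_not hr (A n)).symm

lemma tendsto_fst_aas (r : ℕ) : Tendsto Prod.fst (aas r) atTop := fun S hS ↦
  eventually_aas (A := fun n _ ↦ n ∈ S).2 <| tendsto_const_nhds.congr' <| by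
    filter_upwards [hS] with n hn
    exact (prob_eq_zero fun _ _ ↦ not_not.2 hn).symm

lemma isOrderedMatching_aas (r : ℕ) : ∀ᶠ p in aas r, IsOrderedMatching r p.1 p.2 :=
  eventually_aas.2 <| by
    simp only [prob_eq_zero fun _ hM ↦ not_not.2 hM, tendsto_const_nhds_iff]

lemma tendsto_pow_div_choose (hr : 0 < r) :
    Tendsto (fun n : ℕ ↦ (n : ℝ) ^ r / (r * n).choose r) atTop
      (𝓝 ((r - 1).factorial / (r : ℝ) ^ (r - 1))) := by
  have hconst : (1 : ℝ) * (r.factorial / r ^ r) = (r - 1).factorial / r ^ (r - 1) := by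
    obtain ⟨k, rfl⟩ := Nat.exists_eq_add_of_le' hr
    rw [one_mul, Nat.add_sub_cancel, Nat.factorial_succ, Nat.cast_mul, pow_succ', mul_div_mul_left]
    positivity
  have hequiv := (isEquivalent_choose r).symm.comp_tendsto
    (tendsto_id.const_mul_atTop' hr : Tendsto (fun n : ℕ ↦ r * n) atTop atTop)
  have hchoose : ∀ᶠ n : ℕ in atTop, ((r * n).choose r : ℝ) ≠ 0 := by
    filter_upwards [eventually_gt_atTop 0] with n hn
    exact_mod_cast (Nat.choose_pos (Nat.le_mul_of_pos_right r hn)).ne'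
  rw [← hconst]
  refine (((Asymptotics.isEquivalent_iff_tendsto_one hchoose).1 hequiv).mul_const _).congr
    fun n ↦ ?_
  have : (r.factorial : ℝ) ≠ 0 := by positivity
  have : (r : ℝ) ≠ 0 := by positivity
  simp only [Pi.div_apply, Function.comp_apply, Nat.cast_mul, mul_pow]
  field_simp

lemma tendsto_edgeProb_div_edgeProb (hr : 0 < r) :
    Tendsto (fun n ↦ edgeProb r (n - 1) / edgeProb r n) atTop (𝓝 1) := by
  rw [← tendsto_add_atTop_iff_nat 1]
  have hlim := tendsto_pow_div_choose hr
  have hratio := hlim.div (hlim.comp (tendsto_add_atTop_nat 1)) (by positivity)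
  have hshift := ((tendsto_natCast_div_add_atTop (1 : ℝ)).inv₀ one_ne_zero).pow (r - 1)
  have hprod := hratio.mul hshift
  rw [div_self (by positivity), inv_one, one_pow, one_mul] at hprod
  refine hprod.congr' ?_
  filter_upwards [eventually_gt_atTop 0] with n hn
  have hn' : (n : ℝ) ≠ 0 := by positivity
  obtain ⟨k, rfl⟩ := Nat.exists_eq_add_of_le' hr
  simp only [edgeProb, Function.comp_apply, Nat.add_sub_cancel, Nat.cast_add_one, Pi.div_apply,
    pow_succ, inv_div, div_pow]
  field_simp

lemma eventually_aas_abs_card_edges_sub_le (hr : 0 < r) {T : ℕ → Finset (Finset ℕ)}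
    (hT : ∀ n, T n ⊆ (Icc 1 (r * n)).powersetCard r) {δ : ℝ} (hδ : 0 < δ) :
    ∀ᶠ p in aas r, |(#{e ∈ T p.1 | e ∈ p.2} : ℝ) - #(T p.1) * edgeProb r p.1| ≤ δ * p.1 := by
  refine (eventually_aas (A := fun n M ↦
    |(#{e ∈ T n | e ∈ M} : ℝ) - #(T n) * edgeProb r n| ≤ δ * n)).2 ?_
  have hbound : Tendsto (fun n : ℕ ↦
      ((n : ℝ)⁻¹ + |edgeProb r (n - 1) / edgeProb r n - 1|) / δ ^ 2) atTop (𝓝 0) := by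
    have hinv := tendsto_inv_atTop_nhds_zero_nat (𝕜 := ℝ)
    simpa using
      (hinv.add ((tendsto_edgeProb_div_edgeProb hr).sub_const 1).abs).div_const (δ ^ 2)
  refine squeeze_zero' (Eventually.of_forall fun n ↦ prob_nonneg r n _) ?_ hbound
  filter_upwards [eventually_gt_atTop 0] with n hn
  have hn' : (0 : ℝ) < n := Nat.cast_pos.2 hn
  simp only [not_le]
  calc prob r n (fun M ↦ δ * n < |(#{e ∈ T n | e ∈ M} : ℝ) - #(T n) * edgeProb r n|)
      ≤ _ / (δ * n) ^ 2 := prob_abs_sub_gt_le _ _ (mul_pos hδ hn')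
    _ ≤ (n + n ^ 2 * |edgeProb r (n - 1) / edgeProb r n - 1|) / (δ * n) ^ 2 :=
        div_le_div_of_nonneg_right (variance_card_edges_le hr (hT n)) (sq_nonneg _)
    _ = ((n : ℝ)⁻¹ + |edgeProb r (n - 1) / edgeProb r n - 1|) / δ ^ 2 := by field_simp

end Aas

/-! ### The largest `r`-partite clique -/

section ZClique

open Filter Topology

variable {r : ℕ}

lemma eventually_abs_pow_mul_edgeProb_sub_le (hr : 0 < r) {ε : ℝ} (hε : 0 < ε) :
    ∀ᶠ n : ℕ in atTop,
      |(n : ℝ) ^ r * edgeProb r n - (r - 1).factorial / (r : ℝ) ^ (r - 1) * n| ≤ ε * n := by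
  filter_upwards [Metric.tendsto_nhds.1 (tendsto_pow_div_choose hr) ε hε] with n hn
  rw [edgeProb, ← mul_div_assoc, mul_div_right_comm, ← sub_mul, abs_mul, Nat.abs_cast]
  exact mul_le_mul_of_nonneg_right hn.le (Nat.cast_nonneg n)

lemma eventually_aas_le_zClique (hr : 0 < r) {ε : ℝ} (hε : 0 < ε) : ∀ᶠ p in aas r,
    ((r - 1).factorial / (r : ℝ) ^ (r - 1) - ε) * p.1 ≤
      zClique r {P | IsPartitePattern r P} p.2 := by
  have hconc := eventually_aas_abs_card_edges_sub_le hr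
    (fun n ↦ transversals_subset (r * n) fun i : Fin (r + 1) ↦ i * n) (half_pos hε)
  filter_upwards [hconc, (tendsto_fst_aas r).eventually
    (eventually_abs_pow_mul_edgeProb_sub_le hr (half_pos hε)), isOrderedMatching_aas r]
    with p hX hmean hM
  rw [card_transversals_equipartition, Nat.cast_pow] at hX
  have hz : (#{e ∈ transversals (r * p.1) fun i : Fin (r + 1) ↦ i * p.1 | e ∈ p.2} : ℝ) ≤
      zClique r {P | IsPartitePattern r P} p.2 := by
    exact_mod_cast hM.card_transversals_le_zClique hr _
  linarith [abs_le.1 hX, abs_le.1 hmean]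

/-- Cut points on a grid of mesh `n / m + 1`. There are boundedly many choices of `c`, and every
monotone sequence of cut points in `[0, rn]` rounds down to one of them. -/
def gridCuts (m n : ℕ) (c : Fin (r + 1) → Fin (r * m + 1)) : Fin (r + 1) → ℕ :=
  fun i ↦ c i * (n / m + 1)

lemma exists_gridCuts {m n : ℕ} (hm : 0 < m) {t : Fin (r + 1) → ℕ} (ht : Monotone t)
    (hn : ∀ i, t i ≤ r * n) : ∃ c : Fin (r + 1) → Fin (r * m + 1), Monotone (gridCuts m n c) ∧
      (∀ i, gridCuts m n c i ≤ t i) ∧ ∀ i, t i ≤ gridCuts m n c i + (n / m + 1) := by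
  have hcode (i) : t i / (n / m + 1) < r * m + 1 := by
    refine Nat.lt_succ_of_le (Nat.div_le_of_le_mul ((hn i).trans ?_))
    have hmesh : n ≤ (n / m + 1) * m := (Nat.lt_div_mul_add hm).le.trans_eq (by ring)
    calc r * n ≤ r * ((n / m + 1) * m) := Nat.mul_le_mul_left r hmesh
      _ = (n / m + 1) * (r * m) := by ring
  exact ⟨fun i ↦ ⟨t i / (n / m + 1), hcode i⟩,
    fun i j hij ↦ Nat.mul_le_mul_right _ (Nat.div_le_div_right (ht hij)),
    fun i ↦ Nat.div_mul_le_self _ _, fun i ↦ (Nat.lt_div_mul_add (n / m).succ_pos).le⟩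

lemma IsOrderedMatching.exists_zClique_le_add {m n : ℕ} (hm : 0 < m) {M : Finset (Finset ℕ)}
    (hM : IsOrderedMatching r n M) : ∃ c : Fin (r + 1) → Fin (r * m + 1),
      #(transversals (r * n) (gridCuts m n c)) ≤ n ^ r ∧
      zClique r {P | IsPartitePattern r P} M ≤
        #{e ∈ transversals (r * n) (gridCuts m n c) | e ∈ M} + (r + 1) * (n / m + 1) := by
  obtain ⟨t, ht, htn, hz⟩ := hM.exists_zClique_le_card_transversals
  obtain ⟨c, hmono, hle, hge⟩ := exists_gridCuts hm ht htn
  exact ⟨c, card_transversals_le hmono fun i ↦ (hle i).trans (htn i),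
    hz.trans (hM.card_transversals_le_add hle hge)⟩

lemma exists_eventually_mul_div_add_one_le (a : ℕ) {ε : ℝ} (hε : 0 < ε) :
    ∃ m > 0, ∀ᶠ n : ℕ in atTop, ((a * (n / m + 1) : ℕ) : ℝ) ≤ ε * n := by
  obtain ⟨m, hm⟩ := exists_nat_gt (a / (ε / 2))
  have hm₀ : (0 : ℝ) < m := lt_of_le_of_lt (by positivity) hm
  refine ⟨m, by exact_mod_cast hm₀, ?_⟩
  filter_upwards [(tendsto_natCast_atTop_atTop.const_mul_atTop (half_pos hε)).eventually_ge_atTop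
    (a : ℝ)] with n hn
  have ham : (a : ℝ) / m ≤ ε / 2 := (div_le_comm₀ hm₀ (half_pos hε)).2 hm.le
  calc ((a * (n / m + 1) : ℕ) : ℝ) ≤ a * (n / m + 1) := by
        push_cast
        gcongr
        exact Nat.cast_div_le
    _ = a / m * n + a := by ring
    _ ≤ ε / 2 * n + ε / 2 * n := by gcongr
    _ = ε * n := by ring

lemma eventually_aas_zClique_le (hr : 0 < r) {ε : ℝ} (hε : 0 < ε) : ∀ᶠ p in aas r,
    zClique r {P | IsPartitePattern r P} p.2 ≤
      ((r - 1).factorial / (r : ℝ) ^ (r - 1) + ε) * p.1 := by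
  have hε₃ : 0 < ε / 3 := by positivity
  obtain ⟨m, hm, hround⟩ := exists_eventually_mul_div_add_one_le (r + 1) hε₃
  have hconc := eventually_all.2 fun c : Fin (r + 1) → Fin (r * m + 1) ↦
    eventually_aas_abs_card_edges_sub_le hr
      (fun n ↦ transversals_subset (r * n) (gridCuts m n c)) hε₃
  filter_upwards [hconc, (tendsto_fst_aas r).eventually hround, (tendsto_fst_aas r).eventually
    (eventually_abs_pow_mul_edgeProb_sub_le hr hε₃), isOrderedMatching_aas r]
    with ⟨n, M⟩ hX hround hmean hM
  obtain ⟨c, hcard, hz⟩ := hM.exists_zClique_le_add hm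
  have hz' : (zClique r {P | IsPartitePattern r P} M : ℝ) ≤
      #{e ∈ transversals (r * n) (gridCuts m n c) | e ∈ M} +
        ((r + 1) * (n / m + 1) : ℕ) := by exact_mod_cast hz
  have hcard' : #(transversals (r * n) (gridCuts m n c)) * edgeProb r n ≤ n ^ r * edgeProb r n :=
    mul_le_mul_of_nonneg_right (by exact_mod_cast hcard) (edgeProb_nonneg r n)
  linarith [abs_le.1 (hX c), abs_le.1 hmean]

end ZClique

/-- **Theorem (r-partite cliques).** For every `r ≥ 2`, a.a.s.
`z_{R^(r)}(RM_n^(r)) ∼ ((r-1)!/r^(r-1))·n`. -/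
theorem aas_partite_clique_size (r : ℕ) (hr : 2 ≤ r) (ε : ℝ) (hε : 0 < ε) :
    Filter.Tendsto
      (fun n : ℕ => prob r n (fun M =>
        |(zClique r {P | IsPartitePattern r P} M : ℝ)
            - ((r - 1).factorial : ℝ) / (r : ℝ) ^ (r - 1) * (n : ℝ)| ≤ ε * (n : ℝ)))
      Filter.atTop (nhds 1) := by
  refine tendsto_prob_of_eventually_aas (A := fun n M ↦
    |(zClique r {P | IsPartitePattern r P} M : ℝ) -
      (r - 1).factorial / (r : ℝ) ^ (r - 1) * n| ≤ ε * n) (by omega) ?_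
  filter_upwards [eventually_aas_le_zClique (by omega) hε, eventually_aas_zClique_le (by omega) hε]
    with p hlower hupper
  rw [abs_sub_le_iff]
  constructor <;> linarith
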